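/- arXiv:1310.0650 — 2 statements merged into one kernel-verified Lean document; each statement's English description precedes it below -/
import Mathlib

section
/- Let X ⊆ S^ℕ be a one-directional subshift and set d = limsup_{n→∞} max{ |a|_B / n : a ∈ B_n(W(X)) }, where |a|_B denotes the number of occurrences of the letter B in a. Then h(X) ≥ d · log₂|S|. -/
/-!
Word games (Salo–Törmä, "Playing with Subshifts").
The players' alphabet is `Bool`: player `A` is `false`, player `B` is `true`
(so that the order `A < B` is the order `false < true` on `Bool`).
-/

/-- Auxiliary function for the play of a finite ordered word game: the word built so far
is accumulated in the second argument, and at each step the player indicated by the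
turn order picks the next letter as a function of the word built so far. -/
def playAux {S : Type*} (sA sB : List S → S) : List Bool → List S → List S
  | [], w => w
  | b :: rest, w => playAux sA sB rest (w ++ [(if b then sB else sA) w])

/-- The play of the finite ordered word game with turn order `a`,
where `A` uses strategy `sA` and `B` uses strategy `sB`. -/
def play {S : Type*} (sA sB : List S → S) (a : List Bool) : List S :=
  playAux sA sB a []

/-- The winning set `W(X)` of a target set `X` of finite words: the set of turn orders
for which `A` has a winning strategy. -/
def Wset {S : Type*} (X : Set (List S)) : Set (List Bool) :=
  { a | ∃ sA : List S → S, ∀ sB : List S → S, play sA sB a ∈ X }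

/-- The prefix of length `n` of the play of the infinite ordered word game with
turn order `a : ℕ → Bool`. -/
def playPref {S : Type*} (sA sB : List S → S) (a : ℕ → Bool) : ℕ → List S
  | 0 => []
  | n + 1 => playPref sA sB a n ++ [(if a n then sB else sA) (playPref sA sB a n)]

/-- The play of the infinite ordered word game: coordinate `i` is chosen by the player
`a i` as a function of the word `x_0 ⋯ x_{i-1}` built so far. -/
def playInf {S : Type*} (sA sB : List S → S) (a : ℕ → Bool) : ℕ → S :=
  fun i => (if a i then sB else sA) (playPref sA sB a i)

/-- The winning shift `W(X)` of a target set `X ⊆ S^ℕ`: the set of turn orders for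
which `A` has a winning strategy in the infinite game. -/
def WShift {S : Type*} (X : Set (ℕ → S)) : Set (ℕ → Bool) :=
  { a | ∃ sA : List S → S, ∀ sB : List S → S, playInf sA sB a ∈ X }

/-- The shift map on one-directional configurations. -/
def shiftN {S : Type*} (x : ℕ → S) : ℕ → S := fun i => x (i + 1)

/-- The language `B(X)` of a set of one-directional configurations: all finite words
occurring as factors of its elements. -/
def langN {S : Type*} (X : Set (ℕ → S)) : Set (List S) :=
  { w | ∃ x ∈ X, ∃ i : ℕ, w = List.ofFn fun j : Fin w.length => x (i + j.val) }

/-- The set `B_n(X)` of words of length `n` in the language of `X ⊆ S^ℕ`. -/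
def langNn {S : Type*} (X : Set (ℕ → S)) (n : ℕ) : Set (List S) :=
  { w | w ∈ langN X ∧ w.length = n }

/-- The entropy `h(X) = lim_n (1/n) log₂ |B_n(X)|` of a subshift `X ⊆ S^ℕ`
(stated via `limsup`; for subshifts the limit exists by subadditivity). -/
noncomputable def entropy {S : Type*} (X : Set (ℕ → S)) : ℝ :=
  Filter.atTop.limsup fun n : ℕ => Real.logb 2 ((langNn X n).ncard : ℝ) / (n : ℝ)

/-!
If `A` wins the infinite game with turn order `a`, then `B` may play any prescribed letters at
his turns without leaving `X`: he ignores what `A` does. So `X` realizes every pattern on the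
positions where `a` is `B`, and a factor of `a` of length `n` with `k` letters `B` forces at least
`|S| ^ k` words of length `n` in the language of `X`. It remains to take logarithms, divide by
`n` and pass to the `limsup`.
-/

open Filter Function Real

/-- `X` shatters a set `T` of coordinates if every pattern on `T` extends to a point of `X`
(for `S = Bool` this is the notion of VC theory). Patterns are represented by total functions, of
which only the values on `T` matter. -/
def Shatters {ι S : Type*} (X : Set (ι → S)) (T : Set ι) : Prop :=
  ∀ y : ι → S, ∃ x ∈ X, Set.EqOn x y T

/-- The entropy `(1/n) log₂ |B_n(X)|` of `X` at word length `n`, whose `limsup` is `entropy X`. -/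
noncomputable def blockEntropy {S : Type*} (X : Set (ℕ → S)) (n : ℕ) : ℝ :=
  logb 2 (langNn X n).ncard / n

/-- The maximal frequency `max {|a|_B / n : a ∈ B_n(W)}` of the letter `B`, encoded as `true`, in
the words of length `n` of a set `W` of turn orders. It is a supremum, hence `0` if `W` is empty. -/
noncomputable def maxFreqTrue (W : Set (ℕ → Bool)) (n : ℕ) : ℝ :=
  sSup {r : ℝ | ∃ a ∈ langN W, a.length = n ∧ r = (a.count true : ℝ) / n}

theorem length_playPref {S : Type*} (sA sB : List S → S) (a : ℕ → Bool) (n : ℕ) :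
    (playPref sA sB a n).length = n := by
  induction n with
  | zero => rfl
  | succ n ih => simp [playPref, ih]

theorem shatters_of_mem_WShift {S : Type*} {X : Set (ℕ → S)} {a : ℕ → Bool}
    (ha : a ∈ WShift X) : Shatters X {k | a k = true} := by
  obtain ⟨sA, hsA⟩ := ha
  intro y
  refine ⟨_, hsA fun v => y v.length, fun k (hk : a k = true) => ?_⟩
  simp [playInf, hk, length_playPref]

section Language

variable {S : Type*} {X : Set (ℕ → S)}

theorem ofFn_mem_langNn {x : ℕ → S} (hx : x ∈ X) (i n : ℕ) :
    List.ofFn (fun j : Fin n => x (i + j)) ∈ langNn X n := by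
  refine ⟨⟨x, hx, i, ?_⟩, List.length_ofFn⟩
  apply List.ext_getElem <;> simp

variable [Finite S]

theorem finite_langNn (X : Set (ℕ → S)) (n : ℕ) : (langNn X n).Finite :=
  (List.finite_length_eq S n).subset fun _ hw => hw.2

theorem ncard_langNn_le (X : Set (ℕ → S)) (n : ℕ) : (langNn X n).ncard ≤ Nat.card S ^ n := by
  have := Fintype.ofFinite S
  calc (langNn X n).ncard
      ≤ {w : List S | w.length = n}.ncard :=
        Set.ncard_le_ncard (fun _ hw => hw.2) (List.finite_length_eq S n)
    _ = Nat.card (List.Vector S n) := (Nat.card_coe_set_eq _).symm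
    _ = Nat.card S ^ n := by simp only [Nat.card_eq_fintype_card, card_vector]

theorem Shatters.card_pow_le_ncard_langNn [Nonempty S] {T : Set ℕ} (h : Shatters X T) (i n : ℕ) :
    Nat.card S ^ Nat.card {j : Fin n // i + j ∈ T} ≤ (langNn X n).ncard := by
  have : Finite (langNn X n) := finite_langNn X n
  let position (j : {j : Fin n // i + j ∈ T}) : ℕ := i + j
  have position_injective : Injective position := fun j k hjk =>
    Subtype.ext (Fin.ext (Nat.add_left_cancel hjk))
  let readOff (w : langNn X n) (j : {j : Fin n // i + j ∈ T}) : S :=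
    w.1[j.1]'(j.1.2.trans_eq w.2.2.symm)
  have readOff_surjective : Surjective readOff := by
    intro g
    obtain ⟨x, hxX, hx⟩ := h (extend position g fun _ => Classical.arbitrary S)
    refine ⟨⟨_, ofFn_mem_langNn hxX i n⟩, funext fun j => ?_⟩
    calc readOff ⟨_, ofFn_mem_langNn hxX i n⟩ j
        = x (position j) := by simp [readOff, position]
      _ = g j := (hx j.2).trans (position_injective.extend_apply _ _ j)
  rw [← Nat.card_fun, ← Nat.card_coe_set_eq]
  exact Nat.card_le_card_of_surjective readOff readOff_surjective

end Language

theorem natCard_getElem_eq_eq_count {α : Type*} [DecidableEq α] (w : List α) (b : α) :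
    Nat.card {j : Fin w.length // w[j] = b} = w.count b := by
  rw [Nat.card_eq_fintype_card, Fintype.card_subtype]
  exact Fin.card_filter_univ_eq_vector_get_eq_count b ⟨w, rfl⟩

theorem card_pow_count_le_ncard_langNn {S : Type*} [Finite S] [Nonempty S] {X : Set (ℕ → S)}
    {w : List Bool} (hw : w ∈ langN (WShift X)) :
    Nat.card S ^ w.count true ≤ (langNn X w.length).ncard := by
  obtain ⟨a, ha, i, hwa⟩ := hw
  have letter_eq (j : Fin w.length) : w[j] = a (i + j) := by
    simp [List.getElem_of_eq hwa]
  have count_eq : Nat.card {j : Fin w.length // a (i + j) = true} = w.count true := by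
    simpa only [letter_eq] using natCard_getElem_eq_eq_count w true
  rw [← count_eq]
  exact (shatters_of_mem_WShift ha).card_pow_le_ncard_langNn i w.length

theorem logb_two_natCast_nonneg (n : ℕ) : 0 ≤ logb 2 n :=
  div_nonneg (log_natCast_nonneg n) (log_nonneg one_le_two)

theorem logb_two_natCast_mono : Monotone fun n : ℕ => logb 2 n := by
  intro m n hmn
  rcases m.eq_zero_or_pos with rfl | hm
  · simpa only [Nat.cast_zero, logb_zero] using logb_two_natCast_nonneg n
  · exact logb_le_logb_of_le one_lt_two (by exact_mod_cast hm) (by exact_mod_cast hmn)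

theorem blockEntropy_nonneg {S : Type*} (X : Set (ℕ → S)) (n : ℕ) : 0 ≤ blockEntropy X n :=
  div_nonneg (logb_two_natCast_nonneg _) n.cast_nonneg

theorem blockEntropy_le {S : Type*} [Finite S] (X : Set (ℕ → S)) (n : ℕ) :
    blockEntropy X n ≤ logb 2 (Nat.card S) := by
  refine div_le_of_le_mul₀ n.cast_nonneg (logb_two_natCast_nonneg _) ?_
  calc logb 2 (langNn X n).ncard
      ≤ logb 2 ↑(Nat.card S ^ n) := logb_two_natCast_mono (ncard_langNn_le X n)
    _ = logb 2 (Nat.card S) * n := by rw [Nat.cast_pow, logb_pow, mul_comm]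

theorem maxFreqTrue_nonneg (W : Set (ℕ → Bool)) (n : ℕ) : 0 ≤ maxFreqTrue W n := by
  refine Real.sSup_nonneg ?_
  rintro _ ⟨a, -, -, rfl⟩
  positivity

theorem maxFreqTrue_le_one (W : Set (ℕ → Bool)) (n : ℕ) : maxFreqTrue W n ≤ 1 := by
  refine Real.sSup_le ?_ zero_le_one
  rintro _ ⟨a, -, rfl, rfl⟩
  exact div_le_one_of_le₀ (by exact_mod_cast List.count_le_length) (Nat.cast_nonneg _)

theorem freqTrue_mul_logb_card_le_blockEntropy {S : Type*} [Finite S] [Nonempty S]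
    {X : Set (ℕ → S)} {w : List Bool} (hw : w ∈ langN (WShift X)) :
    (w.count true : ℝ) / w.length * logb 2 (Nat.card S) ≤ blockEntropy X w.length := by
  rw [blockEntropy, div_mul_eq_mul_div]
  gcongr
  calc (w.count true : ℝ) * logb 2 (Nat.card S)
      = logb 2 ↑(Nat.card S ^ w.count true) := by rw [Nat.cast_pow, logb_pow]
    _ ≤ logb 2 (langNn X w.length).ncard :=
        logb_two_natCast_mono (card_pow_count_le_ncard_langNn hw)

theorem maxFreqTrue_mul_logb_card_le_blockEntropy {S : Type*} [Finite S] [Nonempty S]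
    (X : Set (ℕ → S)) (n : ℕ) :
    maxFreqTrue (WShift X) n * logb 2 (Nat.card S) ≤ blockEntropy X n := by
  rw [maxFreqTrue, mul_comm, ← smul_eq_mul,
    ← Real.sSup_smul_of_nonneg (logb_two_natCast_nonneg (Nat.card S))]
  refine Real.sSup_le ?_ (blockEntropy_nonneg X n)
  rintro _ ⟨_, ⟨w, hw, rfl, rfl⟩, rfl⟩
  exact (mul_comm _ _).trans_le (freqTrue_mul_logb_card_le_blockEntropy hw)

theorem entropy_ge_density_mul_log_general {S : Type*} [Finite S] [Nonempty S]
    (X : Set (ℕ → S)) :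
    limsup (maxFreqTrue (WShift X)) atTop * logb 2 (Nat.card S) ≤ entropy X := by
  set L := logb 2 (Nat.card S)
  have hL : 0 ≤ L := logb_two_natCast_nonneg _
  have freq_nonneg := maxFreqTrue_nonneg (WShift X)
  calc limsup (maxFreqTrue (WShift X)) atTop * L
      = limsup (maxFreqTrue (WShift X)) atTop * liminf (fun _ : ℕ => L) atTop := by
        rw [liminf_const]
    _ ≤ limsup (maxFreqTrue (WShift X) * fun _ => L) atTop :=
        le_limsup_mul (.of_forall freq_nonneg)
          (isBoundedUnder_of ⟨1, maxFreqTrue_le_one (WShift X)⟩)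
          (.of_forall fun _ => hL) isBoundedUnder_const
    _ ≤ limsup (blockEntropy X) atTop :=
        limsup_le_limsup (.of_forall (maxFreqTrue_mul_logb_card_le_blockEntropy X))
          (isCoboundedUnder_le_of_le atTop fun n => mul_nonneg (freq_nonneg n) hL)
          (isBoundedUnder_of ⟨L, blockEntropy_le X⟩)
    _ = entropy X := rfl

/-- For a one-directional subshift `X ⊆ S^ℕ`, setting
`d = limsup_n max{ |a|_B / n : a ∈ B_n(W(X)) }`, we have `h(X) ≥ d·log₂|S|`. -/
theorem entropy_ge_density_mul_log {S : Type*} [Fintype S] [Nonempty S]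
    [TopologicalSpace S] [DiscreteTopology S]
    (X : Set (ℕ → S)) (hXcl : IsClosed X) (hXsh : ∀ x ∈ X, shiftN x ∈ X)
    (d : ℝ)
    (hd : d = Filter.atTop.limsup fun n : ℕ =>
      sSup { r : ℝ | ∃ a ∈ langN (WShift X), a.length = n ∧ r = (a.count true : ℝ) / (n : ℝ) }) :
    d * Real.logb 2 (Fintype.card S) ≤ entropy X := by
  rw [hd, ← Nat.card_eq_fintype_card]
  exact entropy_ge_density_mul_log_general X
end

section
/- For all n ∈ ℕ and every set of binary words L ⊆ {0,1}^n, the winning set W(L) ⊆ {A,B}^n has the same cardinality as L: |L| = |W(L)|. -/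
/-!
Conditioning on the first letter turns the game on `X` into a game on one of the residuals
`c⁻¹X = {w | c :: w ∈ X}`. If `A` moves first it suffices to win on one residual, and if `B` moves
first `A` must win on all of them, so for binary words the residuals of `W(X)` by `A` and `B` are
the union and the intersection of `W(0⁻¹X)` and `W(1⁻¹X)`. Since `|U ∪ V| + |U ∩ V| = |U| + |V|`,
the cardinalities of `X` and `W(X)` satisfy the same recursion in the length of the words. An
infinite `X` has finite subsets of every cardinality, and `W` is monotone, so `W(X)` is infinite.
-/

theorem sdiff_nil_eq_iUnion_image_cons {α : Type*} (X : Set (List α)) :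
    X \ {[]} = ⋃ c, List.cons c '' (List.cons c ⁻¹' X) := by
  ext w
  cases w <;> simp

theorem encard_eq_sum_encard_preimage_cons {α : Type*} [Fintype α] (X : Set (List α)) :
    X.encard = ∑ c, (List.cons c ⁻¹' X).encard + (X ∩ {[]}).encard := by
  have hdisj : Pairwise (Function.onFun Disjoint
      fun c => List.cons c '' (List.cons c ⁻¹' X)) := by
    intro c d hcd
    rw [Function.onFun, Set.disjoint_left]
    rintro _ ⟨u, -, rfl⟩ ⟨v, -, huv⟩
    exact hcd (List.cons.inj huv).1.symm
  calc X.encard = (X \ {[]}).encard + (X ∩ {[]}).encard :=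
        (Set.encard_sdiff_add_encard_inter X {[]}).symm
    _ = ∑ c, (List.cons c ⁻¹' X).encard + (X ∩ {[]}).encard := by
        simp only [sdiff_nil_eq_iUnion_image_cons, Set.encard_iUnion_of_finite hdisj,
          finsum_eq_sum_of_fintype, List.cons_injective.encard_image]

section Game

variable {S : Type*}

theorem playAux_cons (sA sB : List S → S) (c : S) (a : List Bool) (w : List S) :
    playAux sA sB a (c :: w) =
      c :: playAux (sA ∘ List.cons c) (sB ∘ List.cons c) a w := by
  induction a generalizing w with
  | nil => rfl
  | cons b a ih => cases b <;> exact ih _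

theorem play_false_cons (sA sB : List S → S) (a : List Bool) :
    play sA sB (false :: a) =
      sA [] :: play (sA ∘ List.cons (sA [])) (sB ∘ List.cons (sA [])) a :=
  playAux_cons sA sB (sA []) a []

theorem play_true_cons (sA sB : List S → S) (a : List Bool) :
    play sA sB (true :: a) =
      sB [] :: play (sA ∘ List.cons (sB [])) (sB ∘ List.cons (sB [])) a :=
  playAux_cons sA sB (sB []) a []

/-- The strategy that opens with the letter `c` and, once the first letter of the word is `d`,
applies `s d` to the rest of the word. It assembles a strategy from strategies for the residual
games; `d` need not be `c`, since the opponent may be the one to choose the first letter. -/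
def openingStrategy (c : S) (s : S → List S → S) : List S → S
  | [] => c
  | d :: w => s d w

theorem openingStrategy_nil (c : S) (s : S → List S → S) : openingStrategy c s [] = c := rfl

theorem openingStrategy_comp_cons (c d : S) (s : S → List S → S) :
    openingStrategy c s ∘ List.cons d = s d := rfl

theorem nil_mem_Wset [Nonempty S] {X : Set (List S)} : [] ∈ Wset X ↔ [] ∈ X := by
  simp [Wset, play, playAux]

theorem false_cons_mem_Wset {X : Set (List S)} {a : List Bool} :
    false :: a ∈ Wset X ↔ ∃ c, a ∈ Wset (List.cons c ⁻¹' X) := by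
  constructor
  · rintro ⟨sA, hA⟩
    refine ⟨sA [], sA ∘ List.cons (sA []), fun sB => ?_⟩
    have hplay := hA (sB ∘ List.tail)
    rw [play_false_cons] at hplay
    exact hplay
  · rintro ⟨c, sA, hA⟩
    refine ⟨openingStrategy c fun _ => sA, fun sB => ?_⟩
    rw [play_false_cons]
    exact hA (sB ∘ List.cons c)

theorem true_cons_mem_Wset [Nonempty S] {X : Set (List S)} {a : List Bool} :
    true :: a ∈ Wset X ↔ ∀ c, a ∈ Wset (List.cons c ⁻¹' X) := by
  constructor
  · rintro ⟨sA, hA⟩ c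
    refine ⟨sA ∘ List.cons c, fun sB => ?_⟩
    have hplay := hA (openingStrategy c fun _ => sB)
    rw [play_true_cons, openingStrategy_nil, openingStrategy_comp_cons] at hplay
    exact hplay
  · intro h
    choose sA hA using h
    refine ⟨openingStrategy (Classical.arbitrary S) sA, fun sB => ?_⟩
    rw [play_true_cons, openingStrategy_comp_cons]
    exact hA (sB []) (sB ∘ List.cons (sB []))

theorem preimage_cons_false_Wset (X : Set (List S)) :
    List.cons false ⁻¹' Wset X = ⋃ c, Wset (List.cons c ⁻¹' X) := by
  ext a
  simp only [Set.mem_preimage, false_cons_mem_Wset, Set.mem_iUnion]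

theorem preimage_cons_true_Wset [Nonempty S] (X : Set (List S)) :
    List.cons true ⁻¹' Wset X = ⋂ c, Wset (List.cons c ⁻¹' X) := by
  ext a
  simp only [Set.mem_preimage, true_cons_mem_Wset, Set.mem_iInter]

theorem Wset_empty : Wset (∅ : Set (List S)) = ∅ :=
  Set.eq_empty_of_forall_notMem fun _ ⟨sA, hA⟩ => hA sA

theorem Wset_mono {X Y : Set (List S)} (h : X ⊆ Y) : Wset X ⊆ Wset Y :=
  fun _ ⟨sA, hA⟩ => ⟨sA, fun sB => h (hA sB)⟩

theorem encard_Wset_inter_nil [Nonempty S] (X : Set (List S)) :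
    (Wset X ∩ {[]}).encard = (X ∩ {[]}).encard := by
  by_cases h : [] ∈ X <;> simp [h, nil_mem_Wset]

end Game

theorem sum_encard_preimage_cons_Wset (L : Set (List Bool)) :
    ∑ b, (List.cons b ⁻¹' Wset L).encard = ∑ c, (Wset (List.cons c ⁻¹' L)).encard := by
  let W (c : Bool) : Set (List Bool) := Wset (List.cons c ⁻¹' L)
  calc ∑ b, (List.cons b ⁻¹' Wset L).encard
      = (⋂ c, W c).encard + (⋃ c, W c).encard := by
        rw [Fintype.sum_bool, preimage_cons_true_Wset, preimage_cons_false_Wset]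
    _ = (W true ∩ W false).encard + (W true ∪ W false).encard :=
        congrArg₂ (fun U V : Set (List Bool) => U.encard + V.encard) iInf_bool_eq iSup_bool_eq
    _ = (W true).encard + (W false).encard := by
        rw [add_comm, Set.encard_union_add_encard_inter]
    _ = ∑ c, (W c).encard := by rw [Fintype.sum_bool]

theorem encard_Wset_of_length_lt {n : ℕ} {L : Set (List Bool)} (hL : ∀ w ∈ L, w.length < n) :
    (Wset L).encard = L.encard := by
  induction n generalizing L with
  | zero =>
    obtain rfl : L = ∅ := Set.eq_empty_of_forall_notMem fun w hw => Nat.not_lt_zero _ (hL w hw)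
    simp only [Wset_empty, Set.encard_empty]
  | succ n ih =>
    have hres (c : Bool) : (Wset (List.cons c ⁻¹' L)).encard = (List.cons c ⁻¹' L).encard :=
      ih fun w hw => Nat.lt_of_succ_lt_succ (hL (c :: w) hw)
    rw [encard_eq_sum_encard_preimage_cons (Wset L), encard_eq_sum_encard_preimage_cons L,
      sum_encard_preimage_cons_Wset, encard_Wset_inter_nil]
    simp only [hres]

theorem encard_Wset_of_finite {L : Set (List Bool)} (hL : L.Finite) :
    (Wset L).encard = L.encard := by
  obtain ⟨n, hn⟩ := (hL.image List.length).bddAbove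
  exact encard_Wset_of_length_lt fun w hw => Nat.lt_succ_of_le (hn (Set.mem_image_of_mem _ hw))

theorem card_winningSet_binary_general (L : Set (List Bool)) :
    L.encard = (Wset L).encard := by
  by_cases hfin : L.Finite
  · exact (encard_Wset_of_finite hfin).symm
  have htop : L.encard = ⊤ := Set.encard_eq_top hfin
  rw [htop, eq_comm, ENat.eq_top_iff_forall_ge]
  intro k
  obtain ⟨F, hFL, hF⟩ := Set.exists_subset_encard_eq (htop ▸ le_top : (k : ℕ∞) ≤ L.encard)
  calc (k : ℕ∞) = (Wset F).encard := by
        rw [encard_Wset_of_finite (Set.finite_of_encard_eq_coe hF), hF]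
    _ ≤ (Wset L).encard := Set.encard_le_encard (Wset_mono hFL)

/-- For every `n` and every set `L ⊆ {0,1}^n` of binary words,
the winning set `W(L)` has the same cardinality as `L`. -/
theorem card_winningSet_binary (n : ℕ) (L : Set (List Bool))
    (hL : ∀ w ∈ L, w.length = n) :
    L.ncard = (Wset L).ncard := by
  rw [Set.ncard_def, Set.ncard_def, card_winningSet_binary_general L]
end
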